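/- For μ sufficiently small, ∫_{ℝ³} |∇ g_β(z)|² dz ≤ C μ for a constant C depending only on a and ‖w‖_{L^∞}. -/

import Mathlib

open Set MeasureTheory

/-- The radial scattering data: the rescaled interaction `w_μ(r) = μ⁻² w(r/μ)` (given through its
radial profile `w`), its zero-energy scattering solution `j̃` in radial form, and for each `κ ≥ 1`
the function `f̃_κ` which equals `κ j̃` on `[0, μ^β̃]` and solves
`f̃_κ'' = -½ a μ^(1-3β̃) f̃_κ` beyond `μ^β̃`. -/
structure ScatteringODE where
  a : ℝ
  beta : ℝ
  mu : ℝ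
  w : ℝ → ℝ
  jt : ℝ → ℝ
  jt' : ℝ → ℝ
  ft : ℝ → ℝ → ℝ
  ft' : ℝ → ℝ → ℝ
  ha : 0 < a
  hbeta : beta ∈ Set.Ioo (1/3 : ℝ) 1
  hmu : mu ∈ Set.Ioo (0 : ℝ) 1
  hw_nonneg : ∀ r, 0 ≤ w r
  hw_bdd : ∃ M, ∀ r, w r ≤ M
  hw_supp : ∀ r, 1 < r → w r = 0
  hjt_deriv : ∀ r, HasDerivAt jt (jt' r) r
  hjt_zero : jt 0 = 0
  hjt_ode : ∀ r ∈ Set.Ioo 0 mu, HasDerivAt jt' ((1/2) * (mu⁻¹ ^ 2 * w (r / mu)) * jt r) r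
  hjt_lin : ∀ r, mu ≤ r → jt r = r - mu * a
  hjt_nonneg : ∀ r, 0 ≤ r → 0 ≤ jt r
  hjt_mono : MonotoneOn jt (Set.Ici 0)
  hjt_le : ∀ r, 0 ≤ r → jt r ≤ r
  hft_deriv : ∀ κ r : ℝ, HasDerivAt (ft κ) (ft' κ r) r
  hft_eq : ∀ κ : ℝ, ∀ r ∈ Set.Icc (0:ℝ) (mu ^ beta), ft κ r = κ * jt r
  hft_ode : ∀ κ r : ℝ, mu ^ beta < r →
      HasDerivAt (ft' κ) (-(1/2) * a * mu ^ (1 - 3 * beta) * ft κ r) r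

/-- A scattering setup together with the tangency parameter `κ_β ∈ (1, μ^β̃/(μ^β̃ - μa))` and the
minimal tangency radius `R_β ∈ (μ^β̃, ∞)` at which `f̃_{κ_β}` is tangent to the line `r ↦ r`. -/
structure TangentScattering extends ScatteringODE where
  hsmall : mu * a < mu ^ beta
  kappa : ℝ
  Rb : ℝ
  hkappa : kappa ∈ Set.Ioo 1 (mu ^ beta / (mu ^ beta - mu * a))
  hRb : mu ^ beta < Rb
  htan_val : ft kappa Rb = Rb
  htan_der : ft' kappa Rb = 1
  hRb_min : ∀ R : ℝ, mu ^ beta < R → ft kappa R = R → ft' kappa R = 1 → Rb ≤ R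

/-- The radial form `f̃` of the scattering solution `f_β`, extended by `f̃(r) = r` for `r ≥ R_β`. -/
noncomputable def TangentScattering.fext (S : TangentScattering) (r : ℝ) : ℝ :=
  if r < S.Rb then S.ft S.kappa r else r

/-- The scattering solution `f_β(z) = f̃(|z|)/|z|` (for `z ≠ 0`). -/
noncomputable def TangentScattering.fbeta (S : TangentScattering)
    (z : EuclideanSpace ℝ (Fin 3)) : ℝ :=
  S.fext ‖z‖ / ‖z‖

/-- Its complement `g_β = 1 - f_β`. -/
noncomputable def TangentScattering.gbeta (S : TangentScattering)
    (z : EuclideanSpace ℝ (Fin 3)) : ℝ :=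
  1 - S.fbeta z

/-!
Put `f = f̃_{κ_β}` and `D(r) = f'(r) - f(r)/r = r (f(r)/r)'`. Then `|∇g_β(z)| = |D(|z|)|/|z|` inside
the ball of radius `R_β` and `∇g_β = 0` outside it, so `∫ |∇g_β|² = 4π ∫₀^{R_β} D²`. The identity
`D² = (f D)' - f f''` turns this into a boundary term minus `∫ f f''`. The boundary term vanishes
at `0`, and at `R_β` because there `f` is tangent to the diagonal. Up to `μ^β̃` we have
`f f'' ≥ 0`, since the interaction is repulsive, so only the outer region contributes, at most
`c ∫ f²` with `c = ½ a μ^(1-3β̃)`. Conservation of `f'² + c f²` gives `f = O(μ^β̃)` there, and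
`c μ^(3β̃) = ½ a μ`.
-/

section SecondOrder

variable {f q : ℝ → ℝ} {p s : ℝ}

-- Convexity of `x ↦ C x² / 2 - f x` reaches the endpoints of `D` although `deriv f` is not known to
-- be continuous there.
lemma deriv_sub_le_mul_sub_of_interior {D : Set ℝ} (hD : Convex ℝ D) {f'' : ℝ → ℝ} {C x y : ℝ}
    (hf : Differentiable ℝ f) (hf'' : ∀ x ∈ interior D, HasDerivAt (deriv f) (f'' x) x)
    (hC : ∀ x ∈ interior D, f'' x ≤ C) (hx : x ∈ D) (hy : y ∈ D) (hxy : x ≤ y) :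
    deriv f y - deriv f x ≤ C * (y - x) := by
  have hd (t : ℝ) : HasDerivAt (fun t => C / 2 * t ^ 2 - f t) (C * t - deriv f t) t :=
    ((((hasDerivAt_id t).pow 2).const_mul (C / 2)).sub (hf t).hasDerivAt).congr_deriv (by
      simp only [id_eq]; ring)
  have hd2 (t : ℝ) (ht : t ∈ interior D) :
      HasDerivAt (fun t => C * t - deriv f t) (C - f'' t) t :=
    (((hasDerivAt_id t).const_mul C).sub (hf'' t ht)).congr_deriv (by ring)
  have hconv : ConvexOn ℝ D fun t => C / 2 * t ^ 2 - f t :=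
    convexOn_of_hasDerivWithinAt2_nonneg hD (fun t _ => (hd t).continuousAt.continuousWithinAt)
      (fun t _ => (hd t).hasDerivWithinAt) (fun t ht => (hd2 t ht).hasDerivWithinAt)
      fun t ht => sub_nonneg.mpr (hC t ht)
  have hmono := hconv.monotoneOn_deriv (fun t _ => (hd t).differentiableAt) hx hy hxy
  rw [(hd x).deriv, (hd y).deriv] at hmono
  linarith

lemma lipschitzOnWith_deriv_of_interior {D : Set ℝ} (hD : Convex ℝ D) {f'' : ℝ → ℝ} {K : NNReal}
    (hf : Differentiable ℝ f) (hf'' : ∀ x ∈ interior D, HasDerivAt (deriv f) (f'' x) x)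
    (hK : ∀ x ∈ interior D, |f'' x| ≤ K) : LipschitzOnWith K (deriv f) D := by
  have hle {x y : ℝ} (hx : x ∈ D) (hy : y ∈ D) (hxy : x ≤ y) :
      |deriv f y - deriv f x| ≤ K * (y - x) := by
    refine abs_le'.mpr ⟨deriv_sub_le_mul_sub_of_interior hD hf hf''
      (fun t ht => (abs_le.mp (hK t ht)).2) hx hy hxy, ?_⟩
    have hneg := deriv_sub_le_mul_sub_of_interior (C := K) hD hf.neg
      (fun t ht => by rw [deriv.neg']; exact (hf'' t ht).fun_neg)
      (fun t ht => by simpa using neg_le.mp (abs_le.mp (hK t ht)).1) hx hy hxy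
    simp only [deriv.neg] at hneg
    linarith
  refine LipschitzOnWith.of_dist_le_mul fun x hx y hy => ?_
  rw [Real.dist_eq, Real.dist_eq]
  rcases le_total x y with hxy | hyx
  · rw [abs_sub_comm, abs_sub_comm x, abs_of_nonneg (sub_nonneg.mpr hxy)]
    exact hle hx hy hxy
  · rw [abs_of_nonneg (sub_nonneg.mpr hyx)]
    exact hle hy hx hyx

lemma continuousOn_deriv_of_linear_ode {Q : ℝ} (hf : Differentiable ℝ f)
    (hode : ∀ r ∈ Ioo p s, HasDerivAt (deriv f) (q r * f r) r) (hQ : ∀ r ∈ Ioo p s, |q r| ≤ Q) :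
    ContinuousOn (deriv f) (Icc p s) := by
  obtain ⟨B, hB⟩ := isCompact_Icc.exists_bound_of_continuousOn
    (hf.continuous.continuousOn (s := Icc p s))
  refine (lipschitzOnWith_deriv_of_interior (K := (Q * B).toNNReal) (convex_Icc p s) hf
    (by simpa only [interior_Icc] using hode) fun r hr => ?_).continuousOn
  rw [interior_Icc] at hr
  rw [abs_mul]
  exact (mul_le_mul (hQ r hr) (hB r (Ioo_subset_Icc_self hr)) (abs_nonneg _)
    ((abs_nonneg _).trans (hQ r hr))).trans (Real.le_coe_toNNReal _)

end SecondOrder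

section Oscillator

variable {f : ℝ → ℝ} {c m r t : ℝ}

lemma energy_eq_of_oscillator (hf : Differentiable ℝ f)
    (hode : ∀ r ∈ Ioi m, HasDerivAt (deriv f) (-c * f r) r) (hr : m < r) (ht : m < t) :
    deriv f r ^ 2 + c * f r ^ 2 = deriv f t ^ 2 + c * f t ^ 2 := by
  have hE : ∀ x ∈ Ioi m, HasDerivAt (fun s => deriv f s ^ 2 + c * f s ^ 2) 0 x := fun x hx =>
    (((hode x hx).pow 2).add (((hf x).hasDerivAt.pow 2).const_mul c)).congr_deriv (by
      norm_num; ring)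
  exact isOpen_Ioi.is_const_of_deriv_eq_zero isPreconnected_Ioi
    (fun x hx => (hE x hx).differentiableAt.differentiableWithinAt) (fun x hx => (hE x hx).deriv)
    hr ht

lemma abs_le_of_oscillator (hc : 0 ≤ c) (hf : Differentiable ℝ f)
    (hode : ∀ r ∈ Ioi m, HasDerivAt (deriv f) (-c * f r) r) (hr : m < r) (ht : m < t) :
    |f r| ≤ |f t| + √(deriv f t ^ 2 + c * f t ^ 2) * |r - t| := by
  have hslope : ∀ x ∈ Ioi m, ‖deriv f x‖ ≤ √(deriv f t ^ 2 + c * f t ^ 2) := fun x hx => by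
    refine Real.abs_le_sqrt ?_
    rw [← energy_eq_of_oscillator hf hode hx ht]
    exact le_add_of_nonneg_right (by positivity)
  have hmv : |f r - f t| ≤ √(deriv f t ^ 2 + c * f t ^ 2) * |r - t| :=
    (convex_Ioi m).norm_image_sub_le_of_norm_deriv_le (fun x _ => hf x) hslope ht hr
  linarith [abs_sub_abs_le_abs_sub (f r) (f t)]

end Oscillator

/-- The function `r ↦ r (f(r)/r)' = f'(r) - f(r)/r` attached to the radial form `f` of the function
`z ↦ f(|z|)/|z|`. Using `dslope` instead of division makes it continuous at `0` when `f` is `C¹`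
with `f 0 = 0`. -/
noncomputable def radialSlope (f : ℝ → ℝ) (r : ℝ) : ℝ := deriv f r - dslope f 0 r

section RadialSlope

variable {f q : ℝ → ℝ} {p r s B : ℝ}

lemma radialSlope_of_ne_zero (h0 : f 0 = 0) (hr : r ≠ 0) :
    radialSlope f r = deriv f r - f r / r := by
  rw [radialSlope, dslope_of_ne _ hr, slope_def_field, h0, sub_zero, sub_zero]

lemma continuousOn_radialSlope {A : Set ℝ} (hf : Differentiable ℝ f)
    (hf' : ContinuousOn (deriv f) A) : ContinuousOn (radialSlope f) A :=
  hf'.sub <| ((continuousOn_dslope Filter.univ_mem).mpr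
    ⟨hf.continuous.continuousOn, hf 0⟩).mono (subset_univ A)

lemma hasDerivAt_div_self (h0 : f 0 = 0) (hf : DifferentiableAt ℝ f r) (hr : r ≠ 0) :
    HasDerivAt (fun s => f s / s) (radialSlope f r / r) r := by
  refine (hf.hasDerivAt.div (hasDerivAt_id r) hr).congr_deriv ?_
  rw [radialSlope_of_ne_zero h0 hr, id_eq]
  field_simp

lemma hasDerivAt_mul_radialSlope (h0 : f 0 = 0) (hf : DifferentiableAt ℝ f r)
    (hode : HasDerivAt (deriv f) (q r * f r) r) (hr : r ≠ 0) :
    HasDerivAt (fun s => f s * radialSlope f s) (radialSlope f r ^ 2 + q r * f r ^ 2) r := by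
  have hD : HasDerivAt (radialSlope f) (q r * f r - radialSlope f r / r) r := by
    refine (hode.sub (hasDerivAt_div_self h0 hf hr)).congr_of_eventuallyEq ?_
    filter_upwards [eventually_ne_nhds hr] with s hs using radialSlope_of_ne_zero h0 hs
  refine (hf.hasDerivAt.mul hD).congr_deriv ?_
  rw [radialSlope_of_ne_zero h0 hr]
  field_simp
  ring

lemma integral_radialSlope_sq_le (hp : 0 ≤ p) (hps : p ≤ s) (h0 : f 0 = 0)
    (hf : Differentiable ℝ f) (hf' : ContinuousOn (deriv f) (Icc p s))
    (hode : ∀ r ∈ Ioo p s, HasDerivAt (deriv f) (q r * f r) r)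
    (hB : ∀ r ∈ Ioo p s, -B ≤ q r * f r ^ 2) :
    ∫ r in p..s, radialSlope f r ^ 2 ≤
      f s * radialSlope f s - f p * radialSlope f p + B * (s - p) := by
  have hD := continuousOn_radialSlope hf hf'
  have h := intervalIntegral.integral_le_sub_of_hasDeriv_right_of_le
    (φ := fun r => radialSlope f r ^ 2)
    (g := fun r => f r * radialSlope f r + B * r)
    (g' := fun r => radialSlope f r ^ 2 + q r * f r ^ 2 + B * 1) hps
    ((hf.continuous.continuousOn.mul hD).add (by fun_prop))
    (fun r hr => ((hasDerivAt_mul_radialSlope h0 (hf r) (hode r hr)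
      (hp.trans_lt hr.1).ne').add ((hasDerivAt_id r).const_mul B)).hasDerivWithinAt)
    (hD.pow 2).integrableOn_Icc (fun r hr => by linarith [hB r hr])
  linarith

end RadialSlope

section Radial

open Metric

variable {E : Type*} [NormedAddCommGroup E]

lemma norm_fderiv_of_eventuallyEq_comp_norm [InnerProductSpace ℝ E] [Nontrivial E] {g : E → ℝ}
    {h : ℝ → ℝ} {h' : ℝ} {z : E} (hz : z ≠ 0) (hh : HasDerivAt h h' ‖z‖)
    (hg : g =ᶠ[nhds z] fun y => h ‖y‖) : ‖fderiv ℝ g z‖ = |h'| := by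
  have hn : DifferentiableAt ℝ (fun y : E => ‖y‖) z :=
    (contDiffAt_norm ℝ (n := 1) hz).differentiableAt one_ne_zero
  have hcomp : HasFDerivAt (fun y : E => h ‖y‖) (h' • fderiv ℝ (fun y : E => ‖y‖) z) z :=
    hh.comp_hasFDerivAt z hn.hasFDerivAt
  rw [hg.fderiv_eq, hcomp.fderiv, norm_smul, norm_fderiv_norm hn, mul_one, Real.norm_eq_abs]

variable [NormedSpace ℝ E] [Nontrivial E] [FiniteDimensional ℝ E] [MeasurableSpace E]
  [BorelSpace E] (ν : Measure E) [ν.IsAddHaarMeasure] {φ : ℝ → ℝ} {R : ℝ}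

local notation "dim" => Module.finrank ℝ E

lemma integrableOn_ball_div_norm_pow (hφ : IntegrableOn φ (Ioo 0 R)) :
    IntegrableOn (fun z : E => φ ‖z‖ / ‖z‖ ^ (dim - 1)) (ball 0 R) ν := by
  refine (integrableOn_fun_norm_addHaar ν (f := fun r => φ r / r ^ (dim - 1))).mpr
    (hφ.congr_fun (fun r hr => ?_) measurableSet_Ioo)
  exact (mul_div_cancel₀ _ (pow_ne_zero _ hr.1.ne')).symm

lemma setIntegral_ball_div_norm_pow (hR : 0 ≤ R) :
    ∫ z in ball (0 : E) R, φ ‖z‖ / ‖z‖ ^ (dim - 1) ∂ν =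
      dim * ν.real (ball 0 1) * ∫ r in 0..R, φ r := by
  have hball (z : E) : (ball (0 : E) R).indicator (fun z => φ ‖z‖ / ‖z‖ ^ (dim - 1)) z =
      (Iio R).indicator (fun r => φ r / r ^ (dim - 1)) ‖z‖ := by
    simp only [indicator, mem_ball_zero_iff, mem_Iio]
  rw [← integral_indicator measurableSet_ball, funext hball, integral_fun_norm_addHaar,
    nsmul_eq_mul, smul_eq_mul, mul_assoc, intervalIntegral.integral_of_le hR,
    integral_Ioc_eq_integral_Ioo]
  have hshell : EqOn (fun r => r ^ (dim - 1) • (Iio R).indicator (fun r => φ r / r ^ (dim - 1)) r)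
      ((Iio R).indicator φ) (Ioi 0) := fun r hr => by
    by_cases hrR : r < R
    · simp only [indicator, mem_Iio, hrR, if_true, smul_eq_mul]
      exact mul_div_cancel₀ _ (pow_ne_zero _ (ne_of_gt hr))
    · simp [hrR]
  rw [setIntegral_congr_fun measurableSet_Ioi hshell, setIntegral_indicator measurableSet_Iio,
    Ioi_inter_Iio]

end Radial

namespace ScatteringODE

variable (S : ScatteringODE)

/-- The coefficient `c = ½ a μ^(1-3β̃)` of the oscillator equation `f̃_κ'' = -c f̃_κ` which holds
beyond the radius `μ^β̃`. -/
noncomputable def outerCoeff : ℝ := 1 / 2 * S.a * S.mu ^ (1 - 3 * S.beta)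

lemma outerCoeff_nonneg : 0 ≤ S.outerCoeff :=
  mul_nonneg (by linarith [S.ha]) (Real.rpow_nonneg S.hmu.1.le _)

lemma mu_lt_mu_rpow_beta : S.mu < S.mu ^ S.beta := by
  simpa using Real.rpow_lt_rpow_of_exponent_gt S.hmu.1 S.hmu.2 S.hbeta.2

lemma mu_rpow_beta_pos : 0 < S.mu ^ S.beta := Real.rpow_pos_of_pos S.hmu.1 _

lemma outerCoeff_mul_rpow_cube : S.outerCoeff * (S.mu ^ S.beta) ^ 3 = 1 / 2 * S.a * S.mu := by
  have hexp : 1 - 3 * S.beta + S.beta * (3 : ℕ) = 1 := by push_cast; ring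
  rw [outerCoeff, mul_assoc, ← Real.rpow_natCast, ← Real.rpow_mul S.hmu.1.le,
    ← Real.rpow_add S.hmu.1, hexp, Real.rpow_one]

lemma outerCoeff_mul_rpow_sq_le : S.outerCoeff * (S.mu ^ S.beta) ^ 2 ≤ 1 / 2 * S.a := by
  refine le_of_mul_le_mul_right ?_ S.mu_rpow_beta_pos
  calc S.outerCoeff * (S.mu ^ S.beta) ^ 2 * S.mu ^ S.beta = 1 / 2 * S.a * S.mu := by
        rw [← S.outerCoeff_mul_rpow_cube]; ring
    _ ≤ 1 / 2 * S.a * S.mu ^ S.beta :=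
        mul_le_mul_of_nonneg_left S.mu_lt_mu_rpow_beta.le (by linarith [S.ha])

variable (κ : ℝ)

lemma differentiable_ft : Differentiable ℝ (S.ft κ) := fun r => (S.hft_deriv κ r).differentiableAt

lemma deriv_ft : deriv (S.ft κ) = S.ft' κ := funext fun r => (S.hft_deriv κ r).deriv

lemma ft_zero : S.ft κ 0 = 0 := by
  rw [S.hft_eq κ 0 ⟨le_rfl, S.mu_rpow_beta_pos.le⟩, S.hjt_zero, mul_zero]

variable {r : ℝ}

lemma ft_eventuallyEq (hr : r ∈ Ioo 0 (S.mu ^ S.beta)) :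
    S.ft κ =ᶠ[nhds r] fun s => κ * S.jt s := by
  filter_upwards [isOpen_Ioo.mem_nhds hr] with s hs using S.hft_eq κ s (Ioo_subset_Icc_self hs)

lemma hasDerivAt_deriv_ft_of_lt_mu (hr : r ∈ Ioo 0 S.mu) :
    HasDerivAt (deriv (S.ft κ)) (1 / 2 * (S.mu⁻¹ ^ 2 * S.w (r / S.mu)) * S.ft κ r) r := by
  have hr' : r ∈ Ioo 0 (S.mu ^ S.beta) := ⟨hr.1, hr.2.trans S.mu_lt_mu_rpow_beta⟩
  have hd : deriv (S.ft κ) =ᶠ[nhds r] fun s => κ * S.jt' s :=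
    (S.ft_eventuallyEq κ hr').deriv.trans
      (.of_eq (funext fun s => ((S.hjt_deriv s).const_mul κ).deriv))
  refine (((S.hjt_ode r hr).const_mul κ).congr_of_eventuallyEq hd).congr_deriv ?_
  rw [S.hft_eq κ r (Ioo_subset_Icc_self hr')]
  ring

lemma hasDerivAt_deriv_ft_of_mu_lt (hr : r ∈ Ioo S.mu (S.mu ^ S.beta)) :
    HasDerivAt (deriv (S.ft κ)) 0 r := by
  have hlin : S.ft κ =ᶠ[nhds r] fun s => κ * (s - S.mu * S.a) := by
    filter_upwards [S.ft_eventuallyEq κ ⟨S.hmu.1.trans hr.1, hr.2⟩, isOpen_Ioi.mem_nhds hr.1]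
      with s hs hmu
    rw [hs, S.hjt_lin s (le_of_lt hmu)]
  have hd : deriv (S.ft κ) =ᶠ[nhds r] fun _ => κ * 1 := hlin.deriv.trans
    (.of_eq (funext fun s => (((hasDerivAt_id s).sub_const _).const_mul κ).deriv))
  exact (hasDerivAt_const r (κ * 1)).congr_of_eventuallyEq hd

lemma hasDerivAt_deriv_ft_of_rpow_lt (hr : S.mu ^ S.beta < r) :
    HasDerivAt (deriv (S.ft κ)) (-S.outerCoeff * S.ft κ r) r := by
  rw [S.deriv_ft]
  exact (S.hft_ode κ r hr).congr_deriv (by rw [outerCoeff]; ring)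

lemma continuousOn_deriv_ft {R : ℝ} (hR : S.mu ^ S.beta ≤ R) :
    ContinuousOn (deriv (S.ft κ)) (Icc 0 R) := by
  have hf := S.differentiable_ft κ
  have hmu := S.hmu.1
  obtain ⟨M, hM⟩ := S.hw_bdd
  have hcore : ContinuousOn (deriv (S.ft κ)) (Icc 0 S.mu) :=
    continuousOn_deriv_of_linear_ode (Q := 1 / 2 * (S.mu⁻¹ ^ 2 * M)) hf
      (fun r hr => S.hasDerivAt_deriv_ft_of_lt_mu κ hr) fun r _ => by
        have hw := S.hw_nonneg (r / S.mu)
        rw [abs_of_nonneg (by positivity)]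
        gcongr
        exact hM _
  have hgap : ContinuousOn (deriv (S.ft κ)) (Icc S.mu (S.mu ^ S.beta)) :=
    continuousOn_deriv_of_linear_ode (q := 0) (Q := 0) hf
      (fun r hr => by simpa using S.hasDerivAt_deriv_ft_of_mu_lt κ hr) fun _ _ => by simp
  have houter : ContinuousOn (deriv (S.ft κ)) (Icc (S.mu ^ S.beta) R) :=
    continuousOn_deriv_of_linear_ode (q := fun _ => -S.outerCoeff) hf
      (fun r hr => S.hasDerivAt_deriv_ft_of_rpow_lt κ hr.1) fun _ _ => le_rfl
  have hinner := hcore.union_of_isClosed hgap isClosed_Icc isClosed_Icc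
  rw [Icc_union_Icc_eq_Icc hmu.le S.mu_lt_mu_rpow_beta.le] at hinner
  have hall := hinner.union_of_isClosed houter isClosed_Icc isClosed_Icc
  rwa [Icc_union_Icc_eq_Icc (hmu.le.trans S.mu_lt_mu_rpow_beta.le) hR] at hall

lemma integral_radialSlope_ft_sq_le {R B : ℝ} (hR : S.mu ^ S.beta ≤ R)
    (hB : ∀ r ∈ Ioo (S.mu ^ S.beta) R, S.outerCoeff * S.ft κ r ^ 2 ≤ B) :
    ∫ r in 0..R, radialSlope (S.ft κ) r ^ 2 ≤
      S.ft κ R * radialSlope (S.ft κ) R + B * (R - S.mu ^ S.beta) := by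
  have hf := S.differentiable_ft κ
  have hf' := S.continuousOn_deriv_ft κ hR
  have hmu := S.hmu.1.le
  have hmub := S.mu_lt_mu_rpow_beta.le
  have hint {p s : ℝ} (hp : 0 ≤ p) (hps : p ≤ s) (hs : s ≤ R) :
      IntervalIntegrable (fun r => radialSlope (S.ft κ) r ^ 2) volume p s :=
    (((continuousOn_radialSlope hf hf').pow 2).mono
      (Icc_subset_Icc hp hs)).intervalIntegrable_of_Icc hps
  have hcore := integral_radialSlope_sq_le (B := 0) le_rfl hmu (S.ft_zero κ) hf
    (hf'.mono (Icc_subset_Icc_right (hmub.trans hR)))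
    (fun r hr => S.hasDerivAt_deriv_ft_of_lt_mu κ hr) fun r _ => by
      have hw := S.hw_nonneg (r / S.mu)
      rw [neg_zero]
      positivity
  have hgap := integral_radialSlope_sq_le (q := 0) (B := 0) hmu hmub (S.ft_zero κ) hf
    (hf'.mono (Icc_subset_Icc hmu hR))
    (fun r hr => by simpa using S.hasDerivAt_deriv_ft_of_mu_lt κ hr) fun _ _ => by simp
  have houter := integral_radialSlope_sq_le (q := fun _ => -S.outerCoeff) (B := B) (hmu.trans hmub)
    hR (S.ft_zero κ) hf (hf'.mono (Icc_subset_Icc_left (hmu.trans hmub)))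
    (fun r hr => S.hasDerivAt_deriv_ft_of_rpow_lt κ hr.1) fun r hr => by linarith [hB r hr]
  rw [← intervalIntegral.integral_add_adjacent_intervals
      (hint le_rfl (hmu.trans hmub) hR) (hint (hmu.trans hmub) hR le_rfl),
    ← intervalIntegral.integral_add_adjacent_intervals
      (hint le_rfl hmu (hmub.trans hR)) (hint hmu hmub hR)]
  rw [S.ft_zero] at hcore
  linarith

end ScatteringODE

namespace TangentScattering

open Metric

variable (S : TangentScattering)

lemma Rb_pos : 0 < S.Rb := S.mu_rpow_beta_pos.trans S.hRb

lemma radialSlope_Rb : radialSlope (S.ft S.kappa) S.Rb = 0 := by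
  rw [radialSlope_of_ne_zero (S.ft_zero _) S.Rb_pos.ne', S.deriv_ft, S.htan_val, S.htan_der,
    div_self S.Rb_pos.ne', sub_self]

lemma abs_ft_le {r : ℝ} (hr : r ∈ Ioo (S.mu ^ S.beta) S.Rb) :
    |S.ft S.kappa r| ≤ S.Rb * (1 + √(1 + S.outerCoeff * S.Rb ^ 2)) := by
  have hR := S.Rb_pos
  have hr0 : 0 < r := S.mu_rpow_beta_pos.trans hr.1
  have h := abs_le_of_oscillator S.outerCoeff_nonneg (S.differentiable_ft S.kappa)
    (fun s hs => S.hasDerivAt_deriv_ft_of_rpow_lt S.kappa hs) hr.1 S.hRb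
  rw [S.deriv_ft, S.htan_val, S.htan_der, one_pow, abs_of_pos hR, abs_sub_comm,
    abs_of_pos (sub_pos.mpr hr.2)] at h
  calc |S.ft S.kappa r| ≤ S.Rb + √(1 + S.outerCoeff * S.Rb ^ 2) * (S.Rb - r) := h
    _ ≤ S.Rb + √(1 + S.outerCoeff * S.Rb ^ 2) * S.Rb := by gcongr; linarith
    _ = S.Rb * (1 + √(1 + S.outerCoeff * S.Rb ^ 2)) := by ring

lemma integral_radialSlope_sq_le :
    ∫ r in 0..S.Rb, radialSlope (S.ft S.kappa) r ^ 2 ≤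
      S.outerCoeff * S.Rb ^ 3 * (1 + √(1 + S.outerCoeff * S.Rb ^ 2)) ^ 2 := by
  set L := 1 + √(1 + S.outerCoeff * S.Rb ^ 2)
  have hc := S.outerCoeff_nonneg
  have hR := S.Rb_pos
  have hm := S.mu_rpow_beta_pos
  have h := S.integral_radialSlope_ft_sq_le S.kappa (B := S.outerCoeff * (S.Rb * L) ^ 2) S.hRb.le
    fun r hr => mul_le_mul_of_nonneg_left (sq_le_sq.mpr <|
      (S.abs_ft_le hr).trans (le_abs_self _)) hc
  rw [S.radialSlope_Rb, mul_zero, zero_add] at h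
  calc _ ≤ S.outerCoeff * (S.Rb * L) ^ 2 * (S.Rb - S.mu ^ S.beta) := h
    _ ≤ S.outerCoeff * (S.Rb * L) ^ 2 * S.Rb := by gcongr; linarith
    _ = S.outerCoeff * S.Rb ^ 3 * L ^ 2 := by ring

lemma integral_radialSlope_sq_le_mul_mu {C' : ℝ} (hR : S.Rb ≤ C' * S.mu ^ S.beta) :
    ∫ r in 0..S.Rb, radialSlope (S.ft S.kappa) r ^ 2 ≤
      1 / 2 * S.a * C' ^ 3 * (1 + √(1 + 1 / 2 * S.a * C' ^ 2)) ^ 2 * S.mu := by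
  have hc := S.outerCoeff_nonneg
  have hRb := S.Rb_pos
  have hcube : S.outerCoeff * S.Rb ^ 3 ≤ 1 / 2 * S.a * C' ^ 3 * S.mu := calc
    _ ≤ S.outerCoeff * (C' * S.mu ^ S.beta) ^ 3 := by gcongr
    _ = S.outerCoeff * (S.mu ^ S.beta) ^ 3 * C' ^ 3 := by ring
    _ = 1 / 2 * S.a * C' ^ 3 * S.mu := by rw [S.outerCoeff_mul_rpow_cube]; ring
  have hsq : S.outerCoeff * S.Rb ^ 2 ≤ 1 / 2 * S.a * C' ^ 2 := calc
    _ ≤ S.outerCoeff * (C' * S.mu ^ S.beta) ^ 2 := by gcongr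
    _ = S.outerCoeff * (S.mu ^ S.beta) ^ 2 * C' ^ 2 := by ring
    _ ≤ 1 / 2 * S.a * C' ^ 2 :=
        mul_le_mul_of_nonneg_right S.outerCoeff_mul_rpow_sq_le (sq_nonneg C')
  calc _ ≤ S.outerCoeff * S.Rb ^ 3 * (1 + √(1 + S.outerCoeff * S.Rb ^ 2)) ^ 2 :=
        S.integral_radialSlope_sq_le
    _ ≤ 1 / 2 * S.a * C' ^ 3 * S.mu * (1 + √(1 + 1 / 2 * S.a * C' ^ 2)) ^ 2 := by
        gcongr
        exact (mul_nonneg hc (by positivity)).trans hcube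
    _ = _ := by ring

variable {z : EuclideanSpace ℝ (Fin 3)}

lemma norm_fderiv_gbeta_of_norm_lt (hz : z ≠ 0) (hzR : ‖z‖ < S.Rb) :
    ‖fderiv ℝ S.gbeta z‖ = |radialSlope (S.ft S.kappa) ‖z‖ / ‖z‖| := by
  have hd := (hasDerivAt_div_self (S.ft_zero S.kappa) (S.differentiable_ft S.kappa ‖z‖)
    (norm_ne_zero_iff.mpr hz)).const_sub 1
  rw [norm_fderiv_of_eventuallyEq_comp_norm hz hd ?_, abs_neg]
  filter_upwards [continuous_norm.continuousAt.eventually_lt_const hzR] with y hy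
  simp only [gbeta, fbeta, fext, if_pos hy]

lemma fderiv_gbeta_of_lt_norm (hzR : S.Rb < ‖z‖) : fderiv ℝ S.gbeta z = 0 := by
  have hg : S.gbeta =ᶠ[nhds z] fun _ => 0 := by
    filter_upwards [continuous_norm.continuousAt.eventually_const_lt hzR] with y hy
    rw [gbeta, fbeta, fext, if_neg hy.not_gt, div_self (S.Rb_pos.trans hy).ne', sub_self]
  rw [hg.fderiv_eq, fderiv_const_apply]

lemma norm_fderiv_gbeta_sq_ae_eq :
    (fun z => ‖fderiv ℝ S.gbeta z‖ ^ 2) =ᵐ[volume]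
      (ball 0 S.Rb).indicator fun z => radialSlope (S.ft S.kappa) ‖z‖ ^ 2 / ‖z‖ ^ 2 := by
  have hsphere : ∀ᵐ z : EuclideanSpace ℝ (Fin 3), z ∉ sphere 0 S.Rb :=
    measure_eq_zero_iff_ae_notMem.mp (Measure.addHaar_sphere_of_ne_zero volume 0 S.Rb_pos.ne')
  filter_upwards [Measure.ae_ne volume 0, hsphere] with z hz hzR
  rw [mem_sphere_zero_iff_norm] at hzR
  rcases lt_or_gt_of_ne hzR with hlt | hgt
  · rw [indicator_of_mem (mem_ball_zero_iff.mpr hlt), S.norm_fderiv_gbeta_of_norm_lt hz hlt,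
      sq_abs, div_pow]
  · rw [indicator_of_notMem (by simpa using hgt.le), S.fderiv_gbeta_of_lt_norm hgt, norm_zero,
      zero_pow two_ne_zero]

lemma integrable_norm_fderiv_gbeta_sq : Integrable fun z => ‖fderiv ℝ S.gbeta z‖ ^ 2 := by
  have hD : IntegrableOn (fun r => radialSlope (S.ft S.kappa) r ^ 2) (Ioo 0 S.Rb) :=
    ((continuousOn_radialSlope (S.differentiable_ft _)
      (S.continuousOn_deriv_ft _ S.hRb.le)).pow 2).integrableOn_Icc.mono_set Ioo_subset_Icc_self
  have hball := integrableOn_ball_div_norm_pow (E := EuclideanSpace ℝ (Fin 3)) volume hD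
  rw [finrank_euclideanSpace_fin] at hball
  exact (hball.integrable_indicator measurableSet_ball).congr S.norm_fderiv_gbeta_sq_ae_eq.symm

lemma integral_norm_fderiv_gbeta_sq :
    ∫ z, ‖fderiv ℝ S.gbeta z‖ ^ 2 =
      4 * Real.pi * ∫ r in 0..S.Rb, radialSlope (S.ft S.kappa) r ^ 2 := by
  have hball := setIntegral_ball_div_norm_pow (volume : Measure (EuclideanSpace ℝ (Fin 3)))
    (φ := fun r => radialSlope (S.ft S.kappa) r ^ 2) S.Rb_pos.le
  have hvol : volume.real (ball (0 : EuclideanSpace ℝ (Fin 3)) 1) = Real.pi * 4 / 3 := by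
    rw [Measure.real, EuclideanSpace.volume_ball_fin_three, ENNReal.ofReal_one, one_pow, one_mul,
      ENNReal.toReal_ofReal (by positivity)]
  rw [finrank_euclideanSpace_fin, hvol] at hball
  rw [integral_congr_ae S.norm_fderiv_gbeta_sq_ae_eq, integral_indicator measurableSet_ball, hball]
  push_cast
  ring

end TangentScattering

theorem gradient_gbeta_L2_bound_general (S : TangentScattering) {C' : ℝ}
    (hR : S.Rb ≤ C' * S.mu ^ S.beta) :
    Integrable (fun z => ‖fderiv ℝ S.gbeta z‖ ^ 2) ∧
      ∫ z, ‖fderiv ℝ S.gbeta z‖ ^ 2 ≤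
        2 * Real.pi * S.a * C' ^ 3 * (1 + √(1 + 1 / 2 * S.a * C' ^ 2)) ^ 2 * S.mu := by
  refine ⟨S.integrable_norm_fderiv_gbeta_sq, ?_⟩
  calc ∫ z, ‖fderiv ℝ S.gbeta z‖ ^ 2
      = 4 * Real.pi * ∫ r in 0..S.Rb, radialSlope (S.ft S.kappa) r ^ 2 :=
        S.integral_norm_fderiv_gbeta_sq
    _ ≤ 4 * Real.pi * (1 / 2 * S.a * C' ^ 3 * (1 + √(1 + 1 / 2 * S.a * C' ^ 2)) ^ 2 * S.mu) := by
        gcongr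
        exact S.integral_radialSlope_sq_le_mul_mu hR
    _ = _ := by ring

/-- For `μ` sufficiently small, `∫_{ℝ³} |∇ g_β|² ≤ C μ` with a constant `C` depending only on `a`
and `‖w‖_∞`. -/
theorem gradient_gbeta_L2_bound (a M C' : ℝ) (ha : 0 < a) (hM : 0 ≤ M) (hC' : 0 < C') :
    ∃ C > (0:ℝ), ∃ μ₀ > (0:ℝ),
      ∀ S : TangentScattering, S.a = a → (∀ r, S.w r ≤ M) →
        S.Rb ≤ C' * S.mu ^ S.beta → S.mu ≤ μ₀ →
        (∫ z : EuclideanSpace ℝ (Fin 3), ‖fderiv ℝ S.gbeta z‖ ^ 2) ≤ C * S.mu := by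
  refine ⟨2 * Real.pi * a * C' ^ 3 * (1 + √(1 + 1 / 2 * a * C' ^ 2)) ^ 2, by positivity, 1,
    one_pos, fun S hSa _ hR _ => hSa ▸ (gradient_gbeta_L2_bound_general S hR).2⟩
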